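/- If ℓ(x) = ∫₀ˣ (1 - F(t)) dt is slowly varying at infinity for a nonnegative random variable with E[X] = ∞, then ∫ₓ^∞ (1 - F(t)) / ℓ²(t) dt = 1/ℓ(x) for all x with ℓ(x) > 0, and moreover ∫ₓ^∞ t dF(t)/ℓ²(t) ∼ 1/ℓ(x) as x → ∞. -/

import Mathlib

/-!
Write `T = 1 - F`. The function `ℓ` is continuous with right derivative `T` everywhere, because `T` is
right continuous, and `ℓ → ∞` because the mean is infinite. Hence `(n + 1) T / ℓⁿ⁺²` is the right
derivative of `-1/ℓⁿ⁺¹` and integrates over `(x, ∞)` to `1/ℓ(x)ⁿ⁺¹` (`ell_power_integral`); `n = 0` is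
the first claim.

For the second claim, insert the case `n = 1`, `1/ℓ(t)² = ∫ₜ^∞ 2T/ℓ³`, and exchange the integrals
(`stieltjes_integral_eq`). The inner integral becomes `∫_{(x,s]} t dF(t)`, a difference of values of
`ℓ(s) - s T(s)` (`mean_Iic`), so that
`∫ₓ^∞ t dF(t)/ℓ²(t) = 2/ℓ(x) - (ℓ(x) - x T(x))/ℓ(x)² - ∫ₓ^∞ 2 s T(s)²/ℓ(s)³ ds`.
Slow variation gives `s T(s) = o(ℓ(s))` (`tail_negligible`), so all terms involving `s T(s)` are
`o(1/ℓ(x))`, and `2/ℓ(x) - 1/ℓ(x)` is left.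
-/

open MeasureTheory Filter Set Asymptotics Topology

/-- Tail of a distribution: `P[X > x]`. -/
noncomputable def tailF (μ : Measure ℝ) (x : ℝ) : ℝ := (μ (Set.Ioi x)).toReal

/-- Truncated mean `ℓ(x) = ∫₀ˣ (1 - F(t)) dt`. -/
noncomputable def ell (μ : Measure ℝ) (x : ℝ) : ℝ := ∫ t in (0:ℝ)..x, tailF μ t

/-- A function is slowly varying at infinity. -/
def SlowlyVarying (f : ℝ → ℝ) : Prop :=
  (∀ᶠ x in atTop, 0 < f x) ∧
    ∀ c : ℝ, 1 < c → Tendsto (fun x => f (c * x) / f x) atTop (𝓝 1)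

lemma tailF_nonneg (μ : Measure ℝ) (x : ℝ) : 0 ≤ tailF μ x := ENNReal.toReal_nonneg

lemma tailF_antitone (μ : Measure ℝ) [IsProbabilityMeasure μ] : Antitone (tailF μ) :=
  fun _ _ h => ENNReal.toReal_mono (measure_ne_top _ _) (measure_mono (Ioi_subset_Ioi h))

lemma tailF_eq (μ : Measure ℝ) [IsProbabilityMeasure μ] (x : ℝ) :
    tailF μ x = 1 - ProbabilityTheory.cdf μ x := by
  rw [ProbabilityTheory.cdf_eq_real, ← probReal_compl_eq_one_sub measurableSet_Iic, compl_Iic]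
  rfl

/-- Right continuity of the tail is what lets `ℓ` have a right derivative at every point, atoms of
`μ` included. -/
lemma tailF_rightCont (μ : Measure ℝ) [IsProbabilityMeasure μ] (x : ℝ) :
    ContinuousWithinAt (tailF μ) (Ici x) x := by
  rw [funext (tailF_eq μ)]
  exact continuousWithinAt_const.sub ((ProbabilityTheory.cdf μ).right_continuous' x)

lemma tailF_intervalIntegrable (μ : Measure ℝ) [IsProbabilityMeasure μ] (a b : ℝ) :
    IntervalIntegrable (tailF μ) volume a b := (tailF_antitone μ).intervalIntegrable

lemma ell_sub (μ : Measure ℝ) [IsProbabilityMeasure μ] (a b : ℝ) :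
    ell μ b - ell μ a = ∫ t in a..b, tailF μ t :=
  intervalIntegral.integral_interval_sub_left (tailF_intervalIntegrable μ _ _)
    (tailF_intervalIntegrable μ _ _)

lemma ell_mono (μ : Measure ℝ) [IsProbabilityMeasure μ] : Monotone (ell μ) := by
  intro a b h
  rw [← sub_nonneg, ell_sub]
  exact intervalIntegral.integral_nonneg h fun t _ => tailF_nonneg μ t

lemma ell_continuous (μ : Measure ℝ) [IsProbabilityMeasure μ] : Continuous (ell μ) :=
  intervalIntegral.continuous_primitive (tailF_intervalIntegrable μ) 0

lemma ell_hasDeriv (μ : Measure ℝ) [IsProbabilityMeasure μ] (x : ℝ) :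
    HasDerivWithinAt (ell μ) (tailF μ x) (Ioi x) x :=
  (intervalIntegral.integral_hasDerivWithinAt_right (tailF_intervalIntegrable μ 0 x)
    ((tailF_antitone μ).measurable.stronglyMeasurable.stronglyMeasurableAtFilter)
    (s := Ici x) (t := Ioi x) ((tailF_rightCont μ x).mono Ioi_subset_Ici_self)).mono
    Ioi_subset_Ici_self

/-- If `ℓ` stayed bounded, the tail would be integrable and, by the layer-cake formula, the mean
finite. -/
lemma ell_tendsto (μ : Measure ℝ) [IsProbabilityMeasure μ] (hnn : μ (Iio 0) = 0)
    (hmean : ∫⁻ x, ENNReal.ofReal |x| ∂μ = ⊤) : Tendsto (ell μ) atTop atTop := by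
  rcases tendsto_atTop_of_monotone (ell_mono μ) with h | ⟨l, hl⟩
  · exact h
  exfalso
  have hint : IntegrableOn (tailF μ) (Ioi 0) := by
    refine integrableOn_Ioi_of_intervalIntegral_norm_tendsto l 0
      (fun i => (tailF_intervalIntegrable μ 0 i).1) tendsto_id ?_
    simp only [Real.norm_of_nonneg (tailF_nonneg μ _)]
    exact hl
  have hpos : ∀ᵐ x ∂μ, 0 ≤ x := by
    rw [ae_iff]; simpa [Iio] using hnn
  have h1 : ∫⁻ x, ENNReal.ofReal |x| ∂μ = ∫⁻ t in Ioi 0, ENNReal.ofReal (tailF μ t) := by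
    rw [lintegral_congr_ae (g := fun x => ENNReal.ofReal x), lintegral_eq_lintegral_meas_lt μ hpos
      aemeasurable_id]
    · refine lintegral_congr fun t => ?_
      rw [tailF, ENNReal.ofReal_toReal (measure_ne_top _ _)]; rfl
    · filter_upwards [hpos] with x hx
      rw [abs_of_nonneg hx]
  rw [hmean, ← ofReal_integral_eq_lintegral_ofReal hint
    (Eventually.of_forall (tailF_nonneg μ))] at h1
  exact ENNReal.ofReal_ne_top h1.symm

/-- The integrand is the right derivative of `-1/ℓⁿ⁺¹`, which tends to `0` at infinity. The cases
`n = 0` and `n = 1` are the ones needed. -/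
lemma ell_power_integral (μ : Measure ℝ) [IsProbabilityMeasure μ]
    (hlim : Tendsto (ell μ) atTop atTop) (n : ℕ) {x : ℝ} (hx : 0 < ell μ x) :
    IntegrableOn (fun t => (n + 1) * tailF μ t / ell μ t ^ (n + 2)) (Ioi x) ∧
    ∫ t in Ioi x, (n + 1) * tailF μ t / ell μ t ^ (n + 2) = 1 / ell μ x ^ (n + 1) := by
  have hp : ∀ t, x ≤ t → 0 < ell μ t := fun t ht => hx.trans_le (ell_mono μ ht)
  set G : ℝ → ℝ := fun t => -(ell μ t ^ (n + 1))⁻¹ with hG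
  have hder : ∀ t, x ≤ t →
      HasDerivWithinAt G ((n + 1) * tailF μ t / ell μ t ^ (n + 2)) (Ioi t) t := by
    intro t ht
    have h0 := (hp t ht).ne'
    have := (((ell_hasDeriv μ t).pow (n + 1)).inv (pow_ne_zero _ h0)).neg
    refine this.congr_deriv ?_
    simp only [Nat.add_sub_cancel, Pi.pow_apply]
    push_cast
    field_simp
    ring
  have hcont : ∀ b, ContinuousOn G (Icc x b) := fun b =>
    (((ell_continuous μ).pow (n + 1)).continuousOn.inv₀
      fun t ht => pow_ne_zero _ (hp t ht.1).ne').neg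
  have hnn : ∀ t, x ≤ t → 0 ≤ (n + 1) * tailF μ t / ell μ t ^ (n + 2) := fun t ht =>
    div_nonneg (mul_nonneg (by positivity) (tailF_nonneg μ t)) (pow_nonneg (hp t ht).le _)
  have hloc : ∀ b, IntegrableOn (fun t => (n + 1) * tailF μ t / ell μ t ^ (n + 2)) (Ioc x b) :=
    fun b => intervalIntegral.integrableOn_deriv_right_of_nonneg (hcont b)
      (fun t ht => hder t ht.1.le) (fun t ht => hnn t ht.1.le)
  have hFTC : ∀ b, x ≤ b →
      ∫ t in x..b, (n + 1) * tailF μ t / ell μ t ^ (n + 2) = G b - G x := by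
    intro b hb
    refine intervalIntegral.integral_eq_sub_of_hasDeriv_right (by rw [uIcc_of_le hb]; exact hcont b)
      (fun t ht => hder t ?_) ((intervalIntegrable_iff_integrableOn_Ioc_of_le hb).2 (hloc b))
    rw [min_eq_left hb] at ht
    exact ht.1.le
  have hGlim : Tendsto (fun b => G b - G x) atTop (𝓝 (1 / ell μ x ^ (n + 1))) := by
    have : Tendsto G atTop (𝓝 (-0)) :=
      (tendsto_inv_atTop_zero.comp ((tendsto_pow_atTop n.succ_ne_zero).comp hlim)).neg
    have := this.sub_const (G x)
    simpa [hG] using this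
  have hlim2 : Tendsto (fun b => ∫ t in x..b, (n + 1) * tailF μ t / ell μ t ^ (n + 2)) atTop
      (𝓝 (1 / ell μ x ^ (n + 1))) :=
    hGlim.congr' (by filter_upwards [eventually_ge_atTop x] with b hb using (hFTC b hb).symm)
  have hint : IntegrableOn (fun t => (n + 1) * tailF μ t / ell μ t ^ (n + 2)) (Ioi x) := by
    refine integrableOn_Ioi_of_intervalIntegral_norm_tendsto (1 / ell μ x ^ (n + 1)) x hloc
      tendsto_id (hlim2.congr' ?_)
    filter_upwards [eventually_ge_atTop x] with b hb
    refine intervalIntegral.integral_congr fun t ht => ?_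
    rw [uIcc_of_le hb] at ht
    exact (Real.norm_of_nonneg (hnn t ht.1)).symm
  exact ⟨hint, tendsto_nhds_unique (intervalIntegral_tendsto_integral_Ioi x hint tendsto_id) hlim2⟩

/-- The truncated first moment: `∫_{[0,s]} t dF(t) = ℓ(s) - s(1 - F(s))`, by the layer-cake
formula. -/
lemma mean_Iic (μ : Measure ℝ) [IsProbabilityMeasure μ] (hnn : μ (Iio 0) = 0) {s : ℝ}
    (hs : 0 ≤ s) : IntegrableOn (fun t => t) (Iic s) μ ∧
      ∫ t in Iic s, t ∂μ = ell μ s - s * tailF μ s := by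
  have hpos : ∀ᵐ x ∂μ, 0 ≤ x := by
    rw [ae_iff]; simpa [Iio] using hnn
  have hint : IntegrableOn (fun t => t) (Iic s) μ := by
    refine Integrable.of_bound measurable_id.aestronglyMeasurable s ?_
    filter_upwards [ae_restrict_of_ae hpos, ae_restrict_mem measurableSet_Iic] with t h1 h2
    rw [Real.norm_of_nonneg h1]; exact h2
  refine ⟨hint, ?_⟩
  have h1 : ∀ t, 0 < t → (μ.restrict (Iic s)).real {a | t < a} =
      (Ioc 0 s).indicator (fun t => tailF μ t - tailF μ s) t := by
    intro t ht
    change (μ.restrict (Iic s)).real (Ioi t) = _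
    rw [measureReal_restrict_apply measurableSet_Ioi, Ioi_inter_Iic]
    by_cases hts : t ≤ s
    · rw [indicator_of_mem (show t ∈ Ioc 0 s from ⟨ht, hts⟩), eq_sub_iff_add_eq]
      change _ + μ.real (Ioi s) = μ.real (Ioi t)
      rw [← measureReal_union (Set.disjoint_left.2 fun a h h' => (h.2.trans_lt h').false)
        measurableSet_Ioi, Ioc_union_Ioi_eq_Ioi hts]
    · rw [indicator_of_notMem fun h => hts h.2, Ioc_eq_empty fun h => hts h.le]
      simp
  have h2 : ∫ t in Iic s, t ∂μ = ∫ t in Ioi 0, (μ.restrict (Iic s)).real {a | t < a} :=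
    Integrable.integral_eq_integral_meas_lt hint (ae_restrict_of_ae hpos)
  have h3 : ∫ t in Ioi 0, (μ.restrict (Iic s)).real {a | t < a} =
      ∫ t in Ioi 0, (Ioc 0 s).indicator (fun t => tailF μ t - tailF μ s) t := by
    exact setIntegral_congr_fun measurableSet_Ioi h1
  rw [h2, h3, setIntegral_indicator measurableSet_Ioc, inter_eq_right.2 Ioc_subset_Ioi_self,
    ← intervalIntegral.integral_of_le hs,
    intervalIntegral.integral_sub (tailF_intervalIntegrable μ _ _) (by simp)]
  simp [ell]

/-- Since the tail decreases, `(s/2)(1 - F(s)) ≤ ℓ(s) - ℓ(s/2)`, which slow variation makes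
negligible compared with `ℓ(s)`. -/
lemma tail_negligible (μ : Measure ℝ) [IsProbabilityMeasure μ] (hsv : SlowlyVarying (ell μ)) :
    Tendsto (fun s => s * tailF μ s / ell μ s) atTop (𝓝 0) := by
  have h1 := (hsv.2 2 one_lt_two).comp (tendsto_id.atTop_div_const (two_pos (α := ℝ)))
  have h2 : Tendsto (fun s => 2 * (1 - (ell μ (2 * (s / 2)) / ell μ (s / 2))⁻¹)) atTop (𝓝 0) := by
    have := ((h1.inv₀ one_ne_zero).const_sub 1).const_mul 2
    simpa using this
  refine squeeze_zero' ?_ ?_ h2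
  · filter_upwards [hsv.1, eventually_ge_atTop 0] with s h h0
    exact div_nonneg (mul_nonneg h0 (tailF_nonneg μ s)) h.le
  · filter_upwards [hsv.1, eventually_ge_atTop 0] with s h h0
    have key : s / 2 * tailF μ s ≤ ell μ s - ell μ (s / 2) := by
      rw [ell_sub]
      calc s / 2 * tailF μ s = ∫ t in (s / 2)..s, tailF μ s := by
            rw [intervalIntegral.integral_const, smul_eq_mul]; ring
        _ ≤ _ := intervalIntegral.integral_mono_on (by linarith) (by simp)
          (tailF_intervalIntegrable μ _ _) fun t ht => tailF_antitone μ ht.2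
    rw [inv_div, mul_div_cancel₀ s two_ne_zero, div_le_iff₀ h]
    have : 2 * (1 - ell μ (s / 2) / ell μ s) * ell μ s = 2 * (ell μ s - ell μ (s / 2)) := by
      field_simp
    linarith

/-- Writing `1/ℓ(t)²` as `∫ₜ^∞ 2(1 - F)/ℓ³` and applying Tonelli turns the integral against `μ` into
a Lebesgue integral involving the truncated means `ℓ(s) - s(1 - F(s))`. -/
lemma stieltjes_integral_eq (μ : Measure ℝ) [IsProbabilityMeasure μ] (hnn : μ (Iio 0) = 0)
    (hlim : Tendsto (ell μ) atTop atTop) {x : ℝ} (h0 : 0 ≤ x) (hx : 0 < ell μ x) :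
    ∫ t in Ioi x, t / ell μ t ^ 2 ∂μ = ∫ s in Ioi x, 2 * tailF μ s / ell μ s ^ 3 *
      ((ell μ s - s * tailF μ s) - (ell μ x - x * tailF μ x)) := by
  have hp : ∀ t, x ≤ t → 0 < ell μ t := fun t ht => hx.trans_le (ell_mono μ ht)
  have hTm : Measurable (tailF μ) := (tailF_antitone μ).measurable
  have hEm : Measurable (ell μ) := (ell_continuous μ).measurable
  set K : ℝ → ℝ := fun s => 2 * tailF μ s / ell μ s ^ 3 with hK
  have hKm : Measurable K := (hTm.const_mul 2).div (hEm.pow_const 3)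
  have hKnn : ∀ s, x ≤ s → 0 ≤ K s := fun s hs =>
    div_nonneg (mul_nonneg zero_le_two (tailF_nonneg μ s)) (pow_nonneg (hp s hs).le _)
  have hU : ∀ s, x ≤ s → IntegrableOn (fun t => t) (Ioc x s) μ ∧
      ∫ t in Ioc x s, t ∂μ =
        (ell μ s - s * tailF μ s) - (ell μ x - x * tailF μ x) := by
    intro s hs
    obtain ⟨is, es⟩ := mean_Iic μ hnn (h0.trans hs)
    obtain ⟨ix, ex⟩ := mean_Iic μ hnn h0
    have hi : IntegrableOn (fun t => t) (Ioc x s) μ := is.mono_set Ioc_subset_Iic_self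
    refine ⟨hi, ?_⟩
    rw [← es, ← ex, ← Iic_union_Ioc_eq_Iic hs, setIntegral_union (Set.disjoint_left.2
      fun a h h' => (h'.1.trans_le h).false) measurableSet_Ioc ix hi]
    ring
  have hUnn : ∀ s, x ≤ s → 0 ≤ (ell μ s - s * tailF μ s) - (ell μ x - x * tailF μ x) := by
    intro s hs
    rw [← (hU s hs).2]
    exact setIntegral_nonneg measurableSet_Ioc fun t ht => h0.trans ht.1.le
  have hKint : ∀ t, x ≤ t → ENNReal.ofReal (1 / ell μ t ^ 2) =
      ∫⁻ s in Ioi t, ENNReal.ofReal (K s) := by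
    intro t ht
    obtain ⟨i, e⟩ := ell_power_integral μ hlim 1 (hp t ht)
    norm_num at i e
    rw [one_div, ← e]
    refine ofReal_integral_eq_lintegral_ofReal i ?_
    filter_upwards [ae_restrict_mem measurableSet_Ioi] with s hs
    exact hKnn s (ht.trans (le_of_lt hs))
  rw [integral_eq_lintegral_of_nonneg_ae, integral_eq_lintegral_of_nonneg_ae]
  rotate_left
  · filter_upwards [ae_restrict_mem measurableSet_Ioi] with s hs
    exact mul_nonneg (hKnn s (le_of_lt hs)) (hUnn s (le_of_lt hs))
  · exact (hKm.mul ((hEm.sub (measurable_id.mul hTm)).sub_const _)).aestronglyMeasurable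
  · filter_upwards [ae_restrict_mem measurableSet_Ioi] with s hs
    exact div_nonneg (h0.trans (le_of_lt hs)) (sq_nonneg _)
  · exact (measurable_id.div (hEm.pow_const 2)).aestronglyMeasurable
  congr 1
  -- The closed condition `t ≤ s` makes the inner `μ`-integral run over `Ioc x s`, whose endpoint `s`
  -- may be an atom; on the Lebesgue side the endpoint does not matter.
  let f : ℝ → ℝ → ENNReal := fun t s =>
    {p : ℝ × ℝ | p.1 ≤ p.2}.indicator (fun p => ENNReal.ofReal p.1 * ENNReal.ofReal (K p.2)) (t, s)
  have hf : Measurable (Function.uncurry f) :=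
    ((ENNReal.measurable_ofReal.comp measurable_fst).mul
      (ENNReal.measurable_ofReal.comp (hKm.comp measurable_snd))).indicator
      (measurableSet_le measurable_fst measurable_snd)
  have hL : ∫⁻ t in Ioi x, ENNReal.ofReal (t / ell μ t ^ 2) ∂μ =
      ∫⁻ t in Ioi x, (∫⁻ s in Ioi x, f t s) ∂μ := by
    refine setLIntegral_congr_fun measurableSet_Ioi fun t ht => ?_
    have ht' : x < t := ht
    have : ∀ s, f t s = (Ici t).indicator
        (fun s => ENNReal.ofReal t * ENNReal.ofReal (K s)) s := fun s => rfl
    simp only [this]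
    rw [lintegral_indicator measurableSet_Ici, Measure.restrict_restrict measurableSet_Ici,
      inter_eq_left.2 (Ici_subset_Ioi.2 ht'), ← Measure.restrict_congr_set Ioi_ae_eq_Ici,
      lintegral_const_mul _ hKm.ennreal_ofReal, ← hKint t ht'.le,
      ← ENNReal.ofReal_mul (h0.trans ht'.le), mul_one_div]
  have hR : ∫⁻ s in Ioi x, ENNReal.ofReal (K s *
        ((ell μ s - s * tailF μ s) - (ell μ x - x * tailF μ x))) =
      ∫⁻ s in Ioi x, ∫⁻ t in Ioi x, f t s ∂μ := by
    refine setLIntegral_congr_fun measurableSet_Ioi fun s hs => ?_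
    have hs' : x ≤ s := le_of_lt hs
    have : ∀ t, f t s = (Iic s).indicator
        (fun t => ENNReal.ofReal t * ENNReal.ofReal (K s)) t := fun t => rfl
    simp only [this]
    rw [lintegral_indicator measurableSet_Iic, Measure.restrict_restrict measurableSet_Iic,
      inter_comm, Ioi_inter_Iic, lintegral_mul_const _ ENNReal.measurable_ofReal,
      ENNReal.ofReal_mul (hKnn s hs'), mul_comm, ← (hU s hs').2,
      ofReal_integral_eq_lintegral_ofReal (hU s hs').1]
    filter_upwards [ae_restrict_mem measurableSet_Ioc] with t ht
    exact h0.trans ht.1.le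
  rw [hL, hR]
  exact lintegral_lintegral_swap hf.aemeasurable

/-- If `s(1 - F(s)) ≤ ε ℓ(s)` from `x` on, then `ℓ(x) ∫ₓ^∞ t dF(t)/ℓ²(t)` is `1` up to `2ε`. The
main terms contribute `2 - 1 = 1`; what remains is `x(1 - F(x))/ℓ(x)` minus a remainder `R ℓ(x)`,
with both quantities nonnegative and at most `2ε`. -/
lemma abs_stieltjes_mul_ell_sub_one_le (μ : Measure ℝ) [IsProbabilityMeasure μ] (hnn : μ (Iio 0) = 0)
    (hlim : Tendsto (ell μ) atTop atTop) {x ε : ℝ} (h0 : 0 ≤ x) (hx : 0 < ell μ x)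
    (hε : ∀ s, x ≤ s → s * tailF μ s / ell μ s ≤ ε) :
    |(∫ t in Ioi x, t / ell μ t ^ 2 ∂μ) * ell μ x - 1| ≤ 2 * ε := by
  have hp : ∀ t, x ≤ t → 0 < ell μ t := fun t ht => hx.trans_le (ell_mono μ ht)
  have hTm : Measurable (tailF μ) := (tailF_antitone μ).measurable
  have hEm : Measurable (ell μ) := (ell_continuous μ).measurable
  obtain ⟨i1, e1⟩ := ell_power_integral μ hlim 0 hx
  obtain ⟨i2, e2⟩ := ell_power_integral μ hlim 1 hx
  norm_num at i1 e1 i2 e2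
  rw [stieltjes_integral_eq μ hnn hlim h0 hx]
  have hlow : ∀ s, x ≤ s → 0 ≤ s * tailF μ s ∧ s * tailF μ s ≤ ε * ell μ s := fun s hs =>
    ⟨mul_nonneg (h0.trans hs) (tailF_nonneg μ s), (div_le_iff₀ (hp s hs)).1 (hε s hs)⟩
  obtain ⟨a1, a2⟩ := hlow x le_rfl
  have hsplit : ∀ s, x ≤ s → 2 * tailF μ s / ell μ s ^ 3 *
      ((ell μ s - s * tailF μ s) - (ell μ x - x * tailF μ x)) =
      2 * (tailF μ s / ell μ s ^ 2) - (ell μ x - x * tailF μ x) * (2 * tailF μ s / ell μ s ^ 3)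
        - 2 * tailF μ s / ell μ s ^ 3 * (s * tailF μ s) := by
    intro s hs
    have := (hp s hs).ne'
    field_simp
    ring
  have hb : ∀ s, x ≤ s → 0 ≤ 2 * tailF μ s / ell μ s ^ 3 * (s * tailF μ s) ∧
      2 * tailF μ s / ell μ s ^ 3 * (s * tailF μ s) ≤ 2 * ε * (tailF μ s / ell μ s ^ 2) := by
    intro s hs
    have hk : 0 ≤ 2 * tailF μ s / ell μ s ^ 3 :=
      div_nonneg (mul_nonneg zero_le_two (tailF_nonneg μ s)) (pow_nonneg (hp s hs).le _)
    refine ⟨mul_nonneg hk (hlow s hs).1, (mul_le_mul_of_nonneg_left (hlow s hs).2 hk).trans_eq ?_⟩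
    have := (hp s hs).ne'
    field_simp
  have i3 : IntegrableOn (fun s => 2 * tailF μ s / ell μ s ^ 3 * (s * tailF μ s)) (Ioi x) := by
    refine (i1.const_mul (2 * ε)).mono' (((hTm.const_mul 2).div (hEm.pow_const 3)).mul
      (measurable_id.mul hTm)).aestronglyMeasurable ?_
    filter_upwards [ae_restrict_mem measurableSet_Ioi] with s hs
    have := hb s (le_of_lt hs)
    rw [Real.norm_of_nonneg this.1]
    exact this.2
  have i12 : IntegrableOn (fun s => 2 * (tailF μ s / ell μ s ^ 2) -
      (ell μ x - x * tailF μ x) * (2 * tailF μ s / ell μ s ^ 3)) (Ioi x) :=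
    (i1.const_mul 2).sub (i2.const_mul _)
  rw [setIntegral_congr_fun measurableSet_Ioi fun s hs => hsplit s (le_of_lt hs),
    integral_sub i12 i3,
    integral_sub (i1.const_mul 2) (i2.const_mul _), integral_const_mul, integral_const_mul, e1, e2]
  have hR0 : 0 ≤ ∫ s in Ioi x, 2 * tailF μ s / ell μ s ^ 3 * (s * tailF μ s) :=
    setIntegral_nonneg measurableSet_Ioi fun s hs => (hb s (le_of_lt hs)).1
  have hR1 : ∫ s in Ioi x, 2 * tailF μ s / ell μ s ^ 3 * (s * tailF μ s) ≤
      2 * ε * (ell μ x)⁻¹ := by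
    rw [← e1, ← integral_const_mul]
    exact setIntegral_mono_on i3 (i1.const_mul _) measurableSet_Ioi
      fun s hs => (hb s (le_of_lt hs)).2
  set R := ∫ s in Ioi x, 2 * tailF μ s / ell μ s ^ 3 * (s * tailF μ s)
  have hval : (2 * (ell μ x)⁻¹ - (ell μ x - x * tailF μ x) * (ell μ x ^ 2)⁻¹ - R) * ell μ x - 1 =
      x * tailF μ x / ell μ x - R * ell μ x := by
    field_simp
    ring
  have hr0 : 0 ≤ x * tailF μ x / ell μ x := div_nonneg a1 hx.le
  have hr1 := hε x le_rfl
  have hRl0 : 0 ≤ R * ell μ x := mul_nonneg hR0 hx.le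
  have hRl1 : R * ell μ x ≤ 2 * ε := by
    rw [← le_div_iff₀ hx]; exact hR1
  rw [hval, abs_le]
  constructor <;> linarith

/-- `∫ₓ^∞ (1-F(t))/ℓ²(t) dt = 1/ℓ(x)` whenever `ℓ(x) > 0`, and
`∫ₓ^∞ t dF(t)/ℓ²(t) ∼ 1/ℓ(x)` as `x → ∞`. -/
theorem stmt3 (μ : Measure ℝ) [IsProbabilityMeasure μ]
    (hnn : μ (Set.Iio 0) = 0)
    (hmean : ∫⁻ x, ENNReal.ofReal |x| ∂μ = ⊤)
    (hsv : SlowlyVarying (ell μ)) :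
    (∀ x : ℝ, 0 < ell μ x →
      (∫ t in Set.Ioi x, tailF μ t / (ell μ t) ^ 2) = 1 / ell μ x) ∧
    Tendsto (fun x => (∫ t in Set.Ioi x, t / (ell μ t) ^ 2 ∂μ) * ell μ x)
      atTop (𝓝 1) := by
  have hlim := ell_tendsto μ hnn hmean
  refine ⟨fun x hx => by simpa using (ell_power_integral μ hlim 0 hx).2, ?_⟩
  rw [Metric.tendsto_atTop']
  intro ε hε
  have h := (((tail_negligible μ hsv).eventually_le_const
    (show 0 < ε / 4 by positivity)).and hsv.1).and (eventually_ge_atTop 0)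
  obtain ⟨N, hN⟩ := eventually_atTop.1 h
  refine ⟨N, fun x hx => ?_⟩
  obtain ⟨⟨-, hpos⟩, h0⟩ := hN x hx.le
  rw [Real.dist_eq]
  have := abs_stieltjes_mul_ell_sub_one_le μ hnn hlim h0 hpos fun s hs => (hN s (hx.le.trans hs)).1.1
  linarith
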